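/- arXiv:2010.09229 — 3 statements merged into one kernel-verified Lean document; each statement's English description precedes it below -/
import Mathlib

section
/- The collection of locally-zero groupoids on X is closed under the groupoid product: if a and b are locally-zero groupoids on X, then a ⋄ b is locally-zero. -/
/-- The groupoid product `⋄` on `Bin(X)`: `(f ⋄ g) x y = g (f x y) (f y x)`. -/
def binProd {X : Type*} (f g : X → X → X) : X → X → X :=
  fun x y => g (f x y) (f y x)

/-- A groupoid is locally-zero if it is idempotent and every pair `{x, y}`
forms a left-zero- or a right-zero-semigroup. -/
def LocallyZero {X : Type*} (f : X → X → X) : Prop :=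
  (∀ x, f x x = x) ∧
    ∀ x y, x ≠ y → (f x y = x ∧ f y x = y) ∨ (f x y = y ∧ f y x = x)

/-!
Sending `f` to the map `(x, y) ↦ (f x y, f y x)` turns `binProd` into composition, and maps
preserving the underlying unordered pair are closed under composition.
-/

theorem locallyZero_iff_sym2_mk_eq {X : Type*} {f : X → X → X} :
    LocallyZero f ↔ ∀ x y, s(f x y, f y x) = s(x, y) := by
  simp only [Sym2.eq_iff]
  constructor
  · rintro ⟨idem, left_or_right_zero⟩ x y
    obtain rfl | hxy := eq_or_ne x y
    · exact .inl ⟨idem x, idem x⟩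
    · exact left_or_right_zero x y hxy
  · exact fun h => ⟨fun x => (h x x).elim And.left And.left, fun x y _ => h x y⟩

theorem stmt_2 {X : Type*} (a b : X → X → X)
    (ha : LocallyZero a) (hb : LocallyZero b) :
    LocallyZero (binProd a b) := by
  rw [locallyZero_iff_sym2_mk_eq] at ha hb ⊢
  intro x y
  calc s(binProd a b x y, binProd a b y x)
      = s(a x y, a y x) := hb (a x y) (a y x)
    _ = s(x, y) := ha x y
end

section
/- Every strong groupoid has a UA-factorization: if • is a strong groupoid on X, then • = U(•) ⋄ A(•), i.e., writing ∗ = U(•) and ∘ = A(•), one has (x ∗ y) ∘ (y ∗ x) = x • y for all x, y ∈ X. -/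
/-- The signature-factor `U(•)`: `x ∗ y = x` if `x = y`, else `x • y`. -/
def signatureFactor {X : Type*} [DecidableEq X] (f : X → X → X) : X → X → X :=
  fun x y => if x = y then x else f x y

/-- The similar-factor `A(•)`: `x ∘ y = x • x` if `x = y`, else `x`. -/
def similarFactor {X : Type*} [DecidableEq X] (f : X → X → X) : X → X → X :=
  fun x y => if x = y then f x x else x

section

variable {X : Type*} [DecidableEq X] (f : X → X → X)

theorem signatureFactor_self (x : X) : signatureFactor f x x = x :=
  if_pos rfl

theorem signatureFactor_of_ne {x y : X} (h : x ≠ y) : signatureFactor f x y = f x y :=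
  if_neg h

theorem similarFactor_self (x : X) : similarFactor f x x = f x x :=
  if_pos rfl

theorem similarFactor_of_ne {x y : X} (h : x ≠ y) : similarFactor f x y = x :=
  if_neg h

theorem similarFactor_eq_left_iff (a b : X) :
    similarFactor f a b = a ↔ (a = b → f a a = a) := by
  rcases eq_or_ne a b with rfl | hab
  · rw [similarFactor_self, forall_prop_of_true rfl]
  · simp only [similarFactor_of_ne f hab, hab, false_imp_iff]

theorem binProd_signatureFactor_apply_self (g : X → X → X) (x : X) :
    binProd (signatureFactor f) g x x = g x x := by
  rw [binProd, signatureFactor_self]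

theorem binProd_signatureFactor_apply_of_ne (g : X → X → X) {x y : X} (h : x ≠ y) :
    binProd (signatureFactor f) g x y = g (f x y) (f y x) := by
  rw [binProd, signatureFactor_of_ne f h, signatureFactor_of_ne f h.symm]

/-- Besides the strong groupoids, this covers every idempotent groupoid, such as a semilattice. -/
theorem stmt_5_general :
    binProd (signatureFactor f) (similarFactor f) = f ↔
      ∀ x y : X, x ≠ y → f x y = f y x → f (f x y) (f x y) = f x y := by
  simp only [funext_iff]
  refine forall₂_congr fun x y => ?_
  rcases eq_or_ne x y with rfl | hxy
  · simp only [binProd_signatureFactor_apply_self, similarFactor_self, ne_eq, not_true_eq_false,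
      false_imp_iff]
  · rw [binProd_signatureFactor_apply_of_ne f _ hxy, similarFactor_eq_left_iff,
      forall_prop_of_true hxy]

end

theorem stmt_5 {X : Type*} [DecidableEq X] (f : X → X → X)
    (hstrong : ∀ x y : X, f x y = f y x → x = y) :
    binProd (signatureFactor f) (similarFactor f) = f ∧
      ∀ x y : X, similarFactor f (signatureFactor f x y) (signatureFactor f y x) = f x y := by
  have factorization : binProd (signatureFactor f) (similarFactor f) = f :=
    (stmt_5_general f).2 fun x y hne hcomm => absurd (hstrong x y hcomm) hne
  exact ⟨factorization, congrFun₂ factorization⟩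
end

section
/- A groupoid on Fin n with the orientation property has a JO-factorization: if • is a groupoid on Fin n such that x • y ∈ {x, y} for all x, y, then • = J(•) ⋄ O, i.e., O (J(•) x y) (J(•) y x) = x • y for all x, y ∈ Fin n. -/
/-- The orient-factor on `Fin n`: `O x y = rev x` if `y = rev x`, else `x`. -/
def orientFactor (n : ℕ) : Fin n → Fin n → Fin n :=
  fun x y => if y = Fin.rev x then Fin.rev x else x

/-- The skew-factor `J(•)` on `Fin n`: `J(•) x y = y • x` if `y = rev x`, else `x • y`. -/
def skewFactor {n : ℕ} (f : Fin n → Fin n → Fin n) : Fin n → Fin n → Fin n :=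
  fun x y => if y = Fin.rev x then f y x else f x y

/-!
Let `σ` be an involution, such as `Fin.rev`. If `y = σ x`, then `J(•)` swaps `x • y` and `y • x`,
two elements of the orbit `{x, σ x}`, and `O`, which returns its second argument on pairs from one
orbit, swaps them back. If `y ≠ σ x`, then `J(•)` changes nothing; `σ` can take `x • y` to `y • x`
only if the two are equal, so `O` returns its first argument `x • y`.
-/

open Function

section Involution

variable {X : Type*} {σ : X → X} {x y a b : X}

theorem eq_or_eq_apply_of_mem_orbit (hσ : Involutive σ) (ha : a = x ∨ a = σ x)
    (hb : b = x ∨ b = σ x) : b = a ∨ b = σ a := by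
  rcases ha with rfl | rfl
  · exact hb
  · rw [hσ x]
    exact hb.symm

theorem eq_of_eq_apply_of_mem_pair (hσ : Involutive σ) (hxy : y ≠ σ x) (ha : a = x ∨ a = y)
    (hb : b = x ∨ b = y) (hab : b = σ a) : b = a := by
  rcases ha with rfl | rfl <;> rcases hb with rfl | rfl
  · rfl
  · exact absurd hab hxy
  · exact absurd (hσ.eq_iff.mp hab.symm) hxy
  · rfl

variable [DecidableEq X]

/-- The orient-factor on a type `X` with respect to a map `σ : X → X`, meant to be an involution.
The orient-factor on `Fin n` is the case `σ = Fin.rev`. -/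
def orientFactorOf (σ : X → X) : X → X → X :=
  fun x y => if y = σ x then σ x else x

/-- The skew-factor of a groupoid `f` on a type `X` with respect to a map `σ : X → X`, meant to be
an involution. The skew-factor on `Fin n` is the case `σ = Fin.rev`. -/
def skewFactorOf (σ : X → X) (f : X → X → X) : X → X → X :=
  fun x y => if y = σ x then f y x else f x y

theorem orientFactorOf_eq_left_iff : orientFactorOf σ a b = a ↔ (b = σ a → b = a) := by
  unfold orientFactorOf
  split_ifs with h <;> simp [h]

theorem orientFactorOf_eq_right_iff : orientFactorOf σ a b = b ↔ b = a ∨ b = σ a := by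
  unfold orientFactorOf
  split_ifs with h <;> simp [h, eq_comm]

theorem skewFactorOf_of_eq (f : X → X → X) (h : y = σ x) : skewFactorOf σ f x y = f y x :=
  if_pos h

theorem skewFactorOf_of_ne (f : X → X → X) (h : y ≠ σ x) : skewFactorOf σ f x y = f x y :=
  if_neg h

theorem stmt_15_general (hσ : Involutive σ) (f : X → X → X)
    (hOP : ∀ x y, f x y = x ∨ f x y = y) :
    binProd (skewFactorOf σ f) (orientFactorOf σ) = f := by
  funext x y
  unfold binProd
  by_cases hxy : y = σ x
  · have hyx : x = σ y := hσ.eq_iff.mp hxy.symm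
    rw [skewFactorOf_of_eq f hxy, skewFactorOf_of_eq f hyx, orientFactorOf_eq_right_iff]
    subst hxy
    exact eq_or_eq_apply_of_mem_orbit hσ (hOP _ x).symm (hOP x _)
  · have hyx : x ≠ σ y := fun h => hxy (hσ.eq_iff.mp h.symm)
    rw [skewFactorOf_of_ne f hxy, skewFactorOf_of_ne f hyx, orientFactorOf_eq_left_iff]
    exact eq_of_eq_apply_of_mem_pair hσ hxy (hOP x y) (hOP y x).symm

end Involution

theorem stmt_15 {n : ℕ} (f : Fin n → Fin n → Fin n)
    (hOP : ∀ x y : Fin n, f x y = x ∨ f x y = y) :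
    binProd (skewFactor f) (orientFactor n) = f ∧
      ∀ x y : Fin n, orientFactor n (skewFactor f x y) (skewFactor f y x) = f x y := by
  have hJO : binProd (skewFactor f) (orientFactor n) = f :=
    stmt_15_general Fin.rev_involutive f hOP
  exact ⟨hJO, congrFun₂ hJO⟩
end
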